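/- Let F_q be a finite field of characteristic at least five, let σ ∈ F_q be a nonsquare, and let n > 1 be an integer. If q ≡ 1 (mod 3), then |𝓘(x^3 + 3σx, 3x^2 + σ, n, q)| = (1/(3 n_3)) (I(n/(2n_3), q^{2 n_3}) − I(n/(2n_3), 1)). If q ≡ −1 (mod 3), then |𝓘(x^3 + 3σx, 3x^2 + σ, n, q)| = (2/(3 n_3)) (I(n/n_3, q^{n_3}) − I(n/n_3, −1)). -/

import Mathlib

open Polynomial

/-- The transform `f_R` of a nonzero polynomial `f` by the rational expression `R = g/h`. -/
noncomputable def ratTransform {K : Type*} [Field K] (g h f : K[X]) : K[X] :=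
  ∑ i ∈ Finset.range (f.natDegree + 1), C (f.coeff i) * g ^ i * h ^ (f.natDegree - i)

/-- `𝓘(g,h,n,q)`: the set of monic irreducible polynomials `f` of degree `n` over the field
such that `f_R` is irreducible. -/
noncomputable def IrredSet {K : Type*} [Field K] (g h : K[X]) (n : ℕ) : Set K[X] :=
  {f | f.Monic ∧ Irreducible f ∧ f.natDegree = n ∧ Irreducible (ratTransform g h f)}

/-- `I(n,q) = (1/n) ∑_{d ∣ n} μ(d) q^{n/d}`, used formally for any rational `q`. -/
noncomputable def Ifun (n : ℕ) (q : ℚ) : ℚ :=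
  (1 / (n : ℚ)) * ∑ d ∈ n.divisors, ((ArithmeticFunction.moebius d : ℤ) : ℚ) * q ^ (n / d)

/-- `I(n/m, q)` with the convention that it is `0` when `m` does not divide `n`
(i.e. when `n/m` is not a positive integer). -/
noncomputable def IfunD (n m : ℕ) (q : ℚ) : ℚ := if m ∣ n then Ifun (n / m) q else 0

/-- `n₃`: the largest power of `3` dividing `n`. -/
def nThree (n : ℕ) : ℕ := 3 ^ (n.factorization 3)


def HasPre {E : Type*} [Field E] (s a : E) : Prop := ∃ b : E, b ^ 3 + 3 * s * b = a * (3 * b ^ 2 + s)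

section
variable {E : Type*} [Field E]

lemma hden (h2 : (2:E) ≠ 0) {s a b : E} (hs : s ≠ 0)
    (h : b ^ 3 + 3 * s * b = a * (3 * b ^ 2 + s)) : 3 * b ^ 2 + s ≠ 0 := by
  intro h0
  rw [h0, mul_zero] at h
  have h1 : (2:E) * 2 * 2 * b * s = 0 := by linear_combination 3 * h - b * h0
  have hb : b = 0 := by
    simpa [h2, hs] using h1
  subst hb
  apply hs; simpa using h0

lemma preC1 [Finite E] (h2 : (2:E) ≠ 0) (h3 : (3:E) ≠ 0) {s : E} (hs : ¬ IsSquare (-3 * s)) (a : E) :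
    HasPre s a := by
  have hs0 : s ≠ 0 := by rintro rfl; apply hs; simp
  have hd : ∀ b : E, 3 * b ^ 2 + s ≠ 0 := by
    intro b hb
    apply hs
    exact ⟨3 * b, by linear_combination (-3) * hb⟩
  have inj : Function.Injective (fun b : E => (b ^ 3 + 3 * s * b) / (3 * b ^ 2 + s)) := by
    intro x y hxy
    simp only at hxy
    rw [div_eq_div_iff (hd x) (hd y)] at hxy
    have : (x - y) * (3 * (x * y - s) ^ 2 + s * (x - y) ^ 2) = 0 := by
      linear_combination hxy
    by_contra hne
    have hne' : x - y ≠ 0 := sub_ne_zero.mpr hne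
    have h4 := (mul_eq_zero.mp this).resolve_left hne'
    apply hs
    refine ⟨3 * (x * y - s) / (x - y), ?_⟩
    field_simp
    linear_combination -h4
  obtain ⟨b, hb⟩ := (Finite.injective_iff_surjective.mp inj) a
  exact ⟨b, by rw [← hb]; simp only; rw [div_mul_cancel₀ _ (hd b)]⟩

open Classical in
lemma preC2 [Fintype E] (h2 : (2:E) ≠ 0) (h3 : (3:E) ≠ 0) {s : E} (hs0 : s ≠ 0) (hs : IsSquare (-3 * s)) :
    3 * (Finset.univ.filter (fun a : E => ¬ HasPre s a)).card +
      2 * (Finset.univ.filter (fun a : E => a ^ 2 = s)).card = 2 * Fintype.card E + 2 := by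
  obtain ⟨p, hp⟩ : ∃ p : E, 3 * p ^ 2 + s = 0 := by
    obtain ⟨r, hr⟩ := hs
    refine ⟨r / 3, ?_⟩
    field_simp
    linear_combination -hr
  have hp0 : p ≠ 0 := by
    rintro rfl; apply hs0; simpa using hp
  have hsp : s = - 3 * p ^ 2 := by linear_combination hp
  have hden0 : ∀ b : E, 3 * b ^ 2 + s = 0 ↔ b = p ∨ b = -p := by
    intro b
    have : 3 * b ^ 2 + s = 3 * ((b - p) * (b + p)) := by rw [hsp]; ring
    rw [this, mul_eq_zero, mul_eq_zero, sub_eq_zero, add_eq_zero_iff_eq_neg]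
    simp [h3]
  set A' := Finset.univ.filter (fun a : E => HasPre s a ∧ a ^ 2 ≠ s) with hA'
  set B' := Finset.univ.filter (fun b : E => 3 * b ^ 2 + s ≠ 0 ∧ b ^ 2 ≠ s) with hB'
  set Z := Finset.univ.filter (fun a : E => a ^ 2 = s) with hZ
  let R : E → E := fun b => (b ^ 3 + 3 * s * b) / (3 * b ^ 2 + s)
  have hR : ∀ b : E, 3 * b ^ 2 + s ≠ 0 → ∀ a, (R b = a ↔ b ^ 3 + 3 * s * b = a * (3 * b ^ 2 + s)) := by
    intro b hb a
    simp only [R]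
    rw [div_eq_iff hb]
  have key : ∀ a b : E, b ^ 3 + 3 * s * b = a * (3 * b ^ 2 + s) → (a ^ 2 = s ↔ b ^ 2 = s) := by
    intro a b h
    have hd := hden h2 hs0 h
    have h5 : (a ^ 2 - s) * (3 * b ^ 2 + s) ^ 2 = (b ^ 2 - s) ^ 3 := by
      linear_combination (-(b ^ 3 + 3 * s * b) - a * (3 * b ^ 2 + s)) * h
    rw [← sub_eq_zero, ← sub_eq_zero (b := s) (a := b ^ 2)]
    constructor
    · intro h6; rw [h6, zero_mul] at h5; exact pow_eq_zero_iff (by norm_num) |>.mp h5.symm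
    · intro h6; rw [h6] at h5; simpa [hd] using h5
  have maps : ∀ b ∈ B', R b ∈ A' := by
    intro b hb
    simp only [hB', Finset.mem_filter, Finset.mem_univ, true_and] at hb
    have := (hR b hb.1 (R b)).1 rfl
    simp only [hA', Finset.mem_filter, Finset.mem_univ, true_and]
    exact ⟨⟨b, this⟩, fun h => hb.2 ((key _ _ this).1 h)⟩
  have fib : ∀ a ∈ A', (B'.filter (fun b => R b = a)).card = 3 := by
    intro a ha
    simp only [hA', Finset.mem_filter, Finset.mem_univ, true_and] at ha
    obtain ⟨⟨x, hx⟩, ha2⟩ := ha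
    have hx2 : x ^ 2 ≠ s := fun h => ha2 ((key _ _ hx).2 h)
    have hd := hden h2 hs0 hx
    have hd' := mt (hden0 x).2 hd
    push Not at hd'
    have e1 : x + p ≠ 0 := fun h => hd'.2 (by linear_combination h)
    have e2 : x - p ≠ 0 := fun h => hd'.1 (by linear_combination h)
    have hset : B'.filter (fun b => R b = a) =
        {x, (x * p + s) / (x + p), (s - x * p) / (x - p)} := by
      ext y
      simp only [hB', Finset.mem_filter, Finset.mem_univ, true_and, Finset.mem_insert,
        Finset.mem_singleton]
      rw [eq_div_iff e1, eq_div_iff e2]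
      have fact : (x ^ 3 + 3 * s * x) * (3 * y ^ 2 + s) - (y ^ 3 + 3 * s * y) * (3 * x ^ 2 + s)
         = - (y - x) * (3 * (y * (x + p) - (x * p + s)) * (y * (x - p) - (s - x * p))) := by
        rw [hsp]; ring
      constructor
      · rintro ⟨⟨hy, hy2⟩, hya⟩
        rw [hR y hy] at hya
        rw [hx, hya] at fact
        have : (y - x) * ((y * (x + p) - (x * p + s)) * (y * (x - p) - (s - x * p))) = 0 := by
          have : 3 * ((y - x) * ((y * (x + p) - (x * p + s)) * (y * (x - p) - (s - x * p)))) = 0 := by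
            linear_combination fact
          simpa [h3] using this
        rcases mul_eq_zero.1 this with h | h
        · left; exact sub_eq_zero.1 h
        · rcases mul_eq_zero.1 h with h | h
          · right; left; exact sub_eq_zero.1 h
          · right; right; exact sub_eq_zero.1 h
      · intro h
        have h0 : (y - x) * (3 * (y * (x + p) - (x * p + s)) * (y * (x - p) - (s - x * p))) = 0 := by
          rcases h with h | h | h
          · rw [h]; ring
          · rw [h]; ring
          · rw [h]; ring
        have h1 : y ^ 3 + 3 * s * y = a * (3 * y ^ 2 + s) := by
          have : ((y ^ 3 + 3 * s * y) - a * (3 * y ^ 2 + s)) * (3 * x ^ 2 + s) = 0 := by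
            linear_combination -fact + h0 + (3 * y ^ 2 + s) * hx
          exact sub_eq_zero.1 ((mul_eq_zero.1 this).resolve_right hd)
        have hy := hden h2 hs0 h1
        exact ⟨⟨hy, fun h => ha2 ((key _ _ h1).2 h)⟩, (hR y hy a).2 h1⟩
    rw [hset]
    have hxs : x ^ 2 - s ≠ 0 := sub_ne_zero.2 hx2
    rw [Finset.card_eq_three]
    refine ⟨_, _, _, ?_, ?_, ?_, rfl⟩
    · intro h
      rw [eq_div_iff e1] at h
      apply hxs; linear_combination h
    · intro h
      rw [eq_div_iff e2] at h
      apply hxs; linear_combination h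
    · intro h
      rw [div_eq_div_iff e1 e2] at h
      have : 2 * p * (x ^ 2 - s) = 0 := by linear_combination h
      simp [h2, hp0, hxs] at this
  have c1 : B'.card = A'.card * 3 := by
    rw [Finset.card_eq_sum_card_fiberwise maps, Finset.sum_congr rfl fib]
    simp
  have c2 : B'.card + 2 + Z.card = Fintype.card E := by
    have hpp : p ≠ -p := by
      intro h
      have : 2 * p = 0 := by linear_combination h
      simp [h2, hp0] at this
    have hcard2 : ({p, -p} : Finset E).card = 2 := Finset.card_pair hpp
    have d1 : Disjoint B' ({p, -p} : Finset E) := by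
      rw [Finset.disjoint_left]
      intro b hb hb'
      simp only [hB', Finset.mem_filter, Finset.mem_univ, true_and] at hb
      simp only [Finset.mem_insert, Finset.mem_singleton] at hb'
      exact hb.1 ((hden0 b).2 hb')
    have d2 : Disjoint (B' ∪ {p, -p}) Z := by
      rw [Finset.disjoint_left]
      intro b hb hb'
      simp only [hB', hZ, Finset.mem_filter, Finset.mem_univ, true_and, Finset.mem_union, Finset.mem_insert, Finset.mem_singleton] at hb hb'
      rcases hb with hb | hb
      · exact hb.2 hb'
      · have h1 := (hden0 b).2 hb
        have : 2 * 2 * s = 0 := by linear_combination h1 - 3 * hb'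
        simp [h2, hs0] at this
    rw [← hcard2, ← Finset.card_union_of_disjoint d1, ← Finset.card_union_of_disjoint d2, ← Finset.card_univ]
    congr 1
    ext b
    simp only [hB', hZ, Finset.mem_filter, Finset.mem_univ, true_and, Finset.mem_union, Finset.mem_insert, Finset.mem_singleton, ← hden0]
    tauto
  have c3 : (Finset.univ.filter (fun a : E => ¬ HasPre s a)).card + A'.card + Z.card = Fintype.card E := by
    have d1 : Disjoint (Finset.univ.filter (fun a : E => ¬ HasPre s a)) A' := by
      rw [Finset.disjoint_left]
      intro b hb hb'
      simp only [hA', Finset.mem_filter, Finset.mem_univ, true_and] at hb hb'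
      exact hb hb'.1
    have hZA : ∀ a : E, a ^ 2 = s → HasPre s a := fun a ha => ⟨a, by rw [← ha]; ring⟩
    have d2 : Disjoint (Finset.univ.filter (fun a : E => ¬ HasPre s a) ∪ A') Z := by
      rw [Finset.disjoint_left]
      intro b hb hb'
      simp only [hA', hZ, Finset.mem_filter, Finset.mem_univ, true_and, Finset.mem_union] at hb hb'
      rcases hb with hb | hb
      · exact hb (hZA _ hb')
      · exact hb.2 hb'
    rw [← Finset.card_union_of_disjoint d1, ← Finset.card_union_of_disjoint d2, ← Finset.card_univ]
    congr 1
    ext b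
    simp only [hA', hZ, Finset.mem_filter, Finset.mem_univ, true_and, Finset.mem_union]
    tauto
  omega

open Classical in
lemma cardZ0 [Fintype E] {s : E} (hs : ¬ IsSquare s) : (Finset.univ.filter (fun a : E => a ^ 2 = s)).card = 0 := by
  rw [Finset.card_eq_zero, Finset.filter_eq_empty_iff]
  intro a _ h
  exact hs ⟨a, by rw [← h]; ring⟩

open Classical in
lemma cardZ2 [Fintype E] (h2 : (2:E) ≠ 0) {s : E} (hs0 : s ≠ 0) (hs : IsSquare s) :
    (Finset.univ.filter (fun a : E => a ^ 2 = s)).card = 2 := by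
  obtain ⟨r, rfl⟩ := hs
  have hr : r ≠ 0 := by rintro rfl; simp at hs0
  rw [Finset.card_eq_two]
  refine ⟨r, -r, ?_, ?_⟩
  · intro h
    have : 2 * r = 0 := by linear_combination h
    simp [h2, hr] at this
  · ext a
    simp only [Finset.mem_filter, Finset.mem_univ, true_and, Finset.mem_insert,
        Finset.mem_singleton]
    rw [← pow_two, sq_eq_sq_iff_eq_or_eq_neg]

lemma neg_three_sq1 [Fintype E] (h : Fintype.card E % 3 = 1) : IsSquare (-3 : E) := by
  classical
  have hdvd : 3 ∣ Nat.card Eˣ := by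
    rw [Nat.card_eq_fintype_card, Fintype.card_units]; omega
  obtain ⟨u, hu⟩ := exists_prime_orderOf_dvd_card' 3 hdvd
  have h1 : (u:E) ^ 3 = 1 := by
    rw [← Units.val_pow_eq_pow_val, ← hu, pow_orderOf_eq_one]; rfl
  have h2 : (u:E) ≠ 1 := by
    intro h; have : u = 1 := Units.ext h
    rw [this, orderOf_one] at hu; omega
  have h3 : (u:E) ^ 2 + u + 1 = 0 := by
    have : ((u:E) - 1) * ((u:E) ^ 2 + u + 1) = 0 := by linear_combination h1
    exact (mul_eq_zero.1 this).resolve_left (sub_ne_zero.2 h2)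
  exact ⟨2 * u + 1, by linear_combination (-4) * h3⟩

lemma neg_three_sq2 [Fintype E] (h2 : (2:E) ≠ 0) (h3 : (3:E) ≠ 0) (h : Fintype.card E % 3 = 2) : ¬ IsSquare (-3 : E) := by
  classical
  rintro ⟨r, hr⟩
  have hw : ((-1 + r) / 2) ^ 2 + ((-1 + r) / 2) + 1 = 0 := by
    field_simp
    linear_combination -hr
  set w := (-1 + r) / 2
  have hw3 : w ^ 3 = 1 := by linear_combination (w - 1) * hw
  have hw0 : w ≠ 0 := by intro h; rw [h] at hw; simp at hw
  have hw1 : w ≠ 1 := by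
    intro h; rw [h] at hw; apply h3; linear_combination hw
  have ho : orderOf w = 3 := orderOf_eq_prime hw3 hw1
  have h5 := orderOf_dvd_of_pow_eq_one (FiniteField.pow_card_sub_one_eq_one w hw0)
  rw [ho] at h5
  omega
end
section
variable {k L : Type*} [Field k] [Field L] [Algebra k L] 

lemma aux1 [Finite k] {P : k[X]} (hP : Irreducible P) (n : ℕ)
    (hd : P.natDegree ∣ n) : P ∣ X ^ Nat.card k ^ n - X := by
  exact (hP.natDegree_dvd_iff_dvd_X_pow_card_pow_sub_X (n := n)).1 hd

lemma aux3 [Fintype L] : (map (algebraMap k L) (X ^ Fintype.card L - X : k[X])).Splits :=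
  (FiniteField.isSplittingField_sub L k).splits

lemma aux4 [Fintype L] : map (algebraMap k L) (X ^ Fintype.card L - X : k[X]) ≠ 0 :=
    Polynomial.map_ne_zero (FiniteField.X_pow_card_sub_X_ne_zero k Fintype.one_lt_card)

lemma aux5 {P : k[X]} (hP : Irreducible P) (hs2 : (map (algebraMap k L) P).Splits) : ∃ x : L, aeval x P = 0 := by
  have hd : (map (algebraMap k L) P).degree ≠ 0 := by
    rw [degree_map]; exact (degree_pos_of_irreducible hP).ne'
  obtain ⟨x, hx⟩ := hs2.exists_eval_eq_zero hd
  exact ⟨x, by rwa [aeval_def, ← eval_map]⟩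

lemma aux2 {P : k[X]} (hP : Irreducible P) [Fintype L]
    (h1 : P ∣ X ^ Fintype.card L - X) : ∃ x : L, aeval x P = 0 := by
  exact aux5 hP (aux3.of_dvd aux4 (Polynomial.map_dvd _ h1))

lemma exists_root_of_dvd [Finite k] [Finite L] {P : k[X]} (hP : Irreducible P)
    (hd : P.natDegree ∣ Module.finrank k L) : ∃ x : L, aeval x P = 0 := by
  obtain ⟨inst⟩ := nonempty_fintype L
  have : Module.Finite k L := Module.Finite.of_finite
  apply aux2 hP
  have h1 := aux1 hP _ hd
  have hc : Nat.card k ^ Module.finrank k L = Fintype.card L := by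
    rw [← Nat.card_eq_fintype_card, Module.natCard_eq_pow_finrank (K := k) (V := L)]
  rwa [hc] at h1

lemma dvd_of_root [FiniteDimensional k L] {P : k[X]} (hP : Irreducible P) {x : L} (hx : aeval x P = 0) :
    P.natDegree ∣ Module.finrank k L := by
  have h := minpoly.eq_of_irreducible hP hx
  have h2 := minpoly.degree_dvd (K := k) (L := L) (IsIntegral.of_finite k x)
  rw [← h, natDegree_mul hP.ne_zero (by simp [hP.ne_zero])] at h2
  simpa using h2

noncomputable def cub (s a : k) : k[X] := X ^ 3 + C (-3 * a) * X ^ 2 + C (3 * s) * X + C (-a * s)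

lemma cub_natDegree (s a : k) : (cub s a).natDegree = 3 := by
  unfold cub; compute_degree!

lemma cub_monic (s a : k) : (cub s a).Monic := by
  unfold cub; monicity!

lemma aeval_cub (s a : k) (x : L) : aeval x (cub s a) =
   (x ^ 3 + 3 * algebraMap k L s * x) - algebraMap k L a * (3 * x ^ 2 + algebraMap k L s) := by
  unfold cub; simp [map_ofNat (algebraMap k L) 3]; ring

lemma hasPre_map_iff (s a : k) : HasPre (algebraMap k L s) (algebraMap k L a) ↔ ∃ x : L, aeval x (cub s a) = 0 := by
  simp only [aeval_cub, sub_eq_zero]; rfl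

lemma cub_irr {s a : k} (h : ¬ HasPre s a) : Irreducible (cub s a) := by
  rw [(cub_monic s a).irreducible_iff_roots_eq_zero_of_degree_le_three (by rw [cub_natDegree]; norm_num)
    (by rw [cub_natDegree])]
  rw [Multiset.eq_zero_iff_forall_notMem]
  intro x hx
  apply h
  have := (hasPre_map_iff (k := k) (L := k) s a).2 ⟨x, by
    have := (mem_roots'.1 hx).2
    rwa [IsRoot, ← coe_aeval_eq_eval] at this⟩
  simpa using this

lemma hasPre_of_three_dvd [Finite k] [Finite L] (h : 3 ∣ Module.finrank k L) (s a : k) :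
    HasPre (algebraMap k L s) (algebraMap k L a) := by
  rw [hasPre_map_iff]
  by_cases hp : HasPre s a
  · obtain ⟨b, hb⟩ := hp
    refine ⟨algebraMap k L b, ?_⟩
    rw [aeval_cub]
    have := congrArg (algebraMap k L) hb
    simp only [map_add, map_mul, map_pow, map_ofNat] at this
    rw [this, sub_self]
  · exact exists_root_of_dvd (cub_irr hp) (by rwa [cub_natDegree])

lemma hasPre_iff_of_not_dvd [FiniteDimensional k L] (h : ¬ 3 ∣ Module.finrank k L) (s a : k) :
    HasPre (algebraMap k L s) (algebraMap k L a) ↔ HasPre s a := by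
  constructor
  · rw [hasPre_map_iff]
    rintro ⟨x, hx⟩
    by_contra hp
    apply h
    have := dvd_of_root (cub_irr hp) hx
    rwa [cub_natDegree] at this
  · rintro ⟨b, hb⟩
    refine ⟨algebraMap k L b, ?_⟩
    have := congrArg (algebraMap k L) hb
    simpa only [map_add, map_mul, map_pow, map_ofNat] using this

lemma sq_irr {a : k} (h : ¬ IsSquare a) : Irreducible (X ^ 2 - C a) := by
  rw [(monic_X_pow_sub_C a (by norm_num)).irreducible_iff_roots_eq_zero_of_degree_le_three (by simp) (by simp)]
  rw [Multiset.eq_zero_iff_forall_notMem]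
  intro x hx
  apply h
  have := (mem_roots'.1 hx).2
  simp [sub_eq_zero] at this
  exact ⟨x, by rw [← this]; ring⟩

lemma sq_of_even [Finite k] [Finite L] (h : 2 ∣ Module.finrank k L) (a : k) :
    IsSquare (algebraMap k L a) := by
  by_cases ha : IsSquare a
  · exact ha.map _
  · obtain ⟨x, hx⟩ := exists_root_of_dvd (L := L) (sq_irr ha) (by simpa using h)
    simp [sub_eq_zero] at hx
    exact ⟨x, by rw [← hx]; ring⟩

lemma sq_of_odd [FiniteDimensional k L] (h : ¬ 2 ∣ Module.finrank k L) (a : k) :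
    IsSquare (algebraMap k L a) ↔ IsSquare a := by
  refine ⟨?_, fun h => h.map _⟩
  rintro ⟨x, hx⟩
  by_contra ha
  apply h
  have := dvd_of_root (sq_irr ha) (x := x) (by simp [hx, pow_two])
  simpa using this

lemma pow_fixed_iff [Fintype k] [Finite L] (x : L) (m : ℕ) :
    x ^ (Fintype.card k) ^ m = x ↔ (minpoly k x).natDegree ∣ m := by
  have : Module.Finite k L := Module.Finite.of_finite
  rw [(minpoly.irreducible (IsIntegral.of_finite k x)).natDegree_dvd_iff_dvd_X_pow_card_pow_sub_X,
    minpoly.dvd_iff]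
  simp [sub_eq_zero]

lemma exists_fixedField [Fintype k] [Finite L] (d m : ℕ) (hm : d * m = Module.finrank k L) :
    ∃ E : IntermediateField k L, (∀ x : L, x ∈ E ↔ x ^ (Fintype.card k) ^ m = x) ∧
      Module.finrank k E = m ∧ Module.finrank E L = d := by
  have : Module.Finite k L := Module.Finite.of_finite
  let φ := FiniteField.frobeniusAlgEquivOfAlgebraic k L
  have hpos : 0 < d * m := by rw [hm]; exact Module.finrank_pos
  have hm0 : m ≠ 0 := by rintro rfl; simp at hpos
  have hd0 : d ≠ 0 := by rintro rfl; simp at hpos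
  refine ⟨IntermediateField.fixedField (Subgroup.zpowers (φ ^ m)), ?_, ?_⟩
  · intro x
    rw [IntermediateField.mem_fixedField_iff]
    have hφ : (φ ^ m) x = x ^ (Fintype.card k) ^ m := by
      rw [AlgEquiv.coe_pow, FiniteField.coe_frobeniusAlgEquivOfAlgebraic_iterate]
    rw [← hφ]
    constructor
    · intro h; exact h _ (Subgroup.mem_zpowers _)
    · intro h f hf
      have : Subgroup.zpowers (φ ^ m) ≤ MulAction.stabilizer Gal(L/k) x := by
        rw [Subgroup.zpowers_le]; exact h
      exact this hf
  · have h1 : Module.finrank (IntermediateField.fixedField (Subgroup.zpowers (φ ^ m))) L = d := by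
      rw [IntermediateField.finrank_fixedField_eq_card, Nat.card_zpowers,
        orderOf_pow' _ hm0, FiniteField.orderOf_frobeniusAlgEquivOfAlgebraic, ← hm]
      simp [Nat.pos_of_ne_zero hm0]
    refine ⟨?_, h1⟩
    have := Module.finrank_mul_finrank k (IntermediateField.fixedField (Subgroup.zpowers (φ ^ m))) L
    rw [h1, ← hm, mul_comm] at this
    exact Nat.eq_of_mul_eq_mul_left (Nat.pos_of_ne_zero hd0) this
end
section
variable {F L : Type*} [Field F] [Field L] [Algebra F L]

/-- the number of elements of the subfield of size `q ^ m` without preimage in `L` -/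
noncomputable def NN (F : Type*) {L : Type*} [Field F] [Field L] [Fintype F] [Algebra F L] (s : L) (m : ℕ) : ℕ :=
  Set.ncard {a : L | a ^ (Fintype.card F) ^ m = a ∧ ¬ HasPre s a}

noncomputable def TT (F : Type*) {L : Type*} [Field F] [Field L] [Algebra F L] (s : L) (m : ℕ) : ℕ :=
  Set.ncard {a : L | (minpoly F a).natDegree = m ∧ ¬ HasPre s a}

lemma sum_TT [Fintype F] [Finite L] (s : L) (m : ℕ) (hm : 0 < m) :
    ∑ i ∈ m.divisors, TT F s i = NN F s m := by
  classical
  obtain ⟨inst⟩ := nonempty_fintype L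
  have h1 : ∀ i, TT F s i = (Finset.univ.filter
      (fun a : L => (minpoly F a).natDegree = i ∧ ¬ HasPre s a)).card := by
    intro i; unfold TT; rw [← Set.ncard_coe_finset]; simp
  have h2 : NN F s m = (Finset.univ.filter
      (fun a : L => (minpoly F a).natDegree ∣ m ∧ ¬ HasPre s a)).card := by
    unfold NN; rw [← Set.ncard_coe_finset]; simp [pow_fixed_iff]
  rw [h2, Finset.card_eq_sum_card_fiberwise (f := fun a : L => (minpoly F a).natDegree) (t := m.divisors)]
  · apply Finset.sum_congr rfl
    intro i hi
    rw [h1, Finset.filter_filter]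
    congr 1
    ext a
    simp only [Finset.mem_filter, Finset.mem_univ, true_and]
    have := Nat.dvd_of_mem_divisors hi
    constructor
    · rintro ⟨rfl, h⟩; exact ⟨⟨this, h⟩, rfl⟩
    · rintro ⟨⟨_, h⟩, rfl⟩; exact ⟨rfl, h⟩
  · intro a ha
    simp only [Finset.coe_filter, Finset.mem_univ, true_and, Set.mem_ofPred_eq] at ha
    simp [ha.1, hm.ne']

lemma TT_eq [Fintype F] [Finite L] (s : L) (n : ℕ) (hn : 0 < n) :
    (TT F s n : ℚ) = ∑ d ∈ n.divisors, ((ArithmeticFunction.moebius d : ℤ) : ℚ) * (NN F s (n / d) : ℚ) := by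
  have := (ArithmeticFunction.sum_eq_iff_sum_mul_moebius_eq (R := ℚ) (f := fun i => (TT F s i : ℚ))
    (g := fun i => (NN F s i : ℚ))).1 (by
      intro m hm
      rw [← sum_TT s m hm]; push_cast; rfl) n hn
  rw [← this, ← Nat.map_div_right_divisors, Finset.sum_map]
  rfl

lemma NN_zero [Fintype F] [Finite L] (s : F) (d m : ℕ) (hm : d * m = Module.finrank F L) (h3 : 3 ∣ d) :
    NN F (algebraMap F L s) m = 0 := by
  obtain ⟨E, hE, h1, h2⟩ := exists_fixedField (k := F) (L := L) d m hm
  unfold NN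
  rw [Set.ncard_eq_zero]
  ext a
  simp only [Set.mem_ofPred_eq, Set.mem_empty_iff_false, iff_false, not_and, not_not]
  intro ha
  have haE : a ∈ E := (hE a).2 ha
  exact hasPre_of_three_dvd (k := E) (L := L) (by rwa [h2]) (algebraMap F E s) ⟨a, haE⟩

lemma NN_eq [Fintype F] [Finite L] (s : F) (d m : ℕ) (hm : d * m = Module.finrank F L) (h3 : ¬ 3 ∣ d) :
    ∃ (E : IntermediateField F L), Module.finrank F E = m ∧
     NN F (algebraMap F L s) m = Set.ncard {a : E | ¬ HasPre (algebraMap F E s) a} := by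
  obtain ⟨E, hE, h1, h2⟩ := exists_fixedField (k := F) (L := L) d m hm
  refine ⟨E, h1, ?_⟩
  unfold NN
  rw [← Set.ncard_image_of_injective _ (Subtype.val_injective (p := fun x => x ∈ E))]
  congr 1
  ext a
  have key : ∀ a : E, HasPre (algebraMap F L s) (a : L) ↔ HasPre (algebraMap F E s) a := fun a =>
    hasPre_iff_of_not_dvd (k := E) (L := L) (by rwa [h2]) (algebraMap F E s) a
  simp only [Set.mem_ofPred_eq, ← hE, Set.mem_image, Subtype.exists, exists_and_right, exists_eq_right]
  constructor
  · rintro ⟨h, h'⟩; exact ⟨h, by rwa [← key]⟩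
  · rintro ⟨h, h'⟩; exact ⟨h, by rwa [← key] at h'⟩

lemma ne_of_char [Fintype F] (hchar : 5 ≤ ringChar F) : (2:F) ≠ 0 ∧ (3:F) ≠ 0 := by
  constructor
  · intro h
    have := ringChar.dvd (R := F) (x := 2) (by exact_mod_cast h)
    exact absurd (Nat.le_of_dvd (by norm_num) this) (by omega)
  · intro h
    have := ringChar.dvd (R := F) (x := 3) (by exact_mod_cast h)
    exact absurd (Nat.le_of_dvd (by norm_num) this) (by omega)

lemma NN_even [Fintype F] [Finite L] (hchar : 5 ≤ ringChar F) {s : F} (hs : ¬ IsSquare s) (d m : ℕ)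
    (hm : d * m = Module.finrank F L) (h3 : ¬ 3 ∣ d) (h2 : 2 ∣ m) :
    (NN F (algebraMap F L s) m : ℚ) = 2 / 3 * ((Fintype.card F : ℚ) ^ m - 1) := by
  classical
  obtain ⟨E, h1, hN⟩ := NN_eq (L := L) s d m hm h3
  obtain ⟨inst⟩ := nonempty_fintype E
  obtain ⟨c2, c3⟩ := ne_of_char hchar
  have c2' : (2 : E) ≠ 0 := by
    rw [← map_ofNat (algebraMap F E) 2]; exact (_root_.map_ne_zero _).2 c2
  have c3' : (3 : E) ≠ 0 := by
    rw [← map_ofNat (algebraMap F E) 3]; exact (_root_.map_ne_zero _).2 c3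
  have hs0 : s ≠ 0 := by rintro rfl; simp at hs
  have hs0' : algebraMap F E s ≠ 0 := (_root_.map_ne_zero _).2 hs0
  have q1 : IsSquare (algebraMap F E s) := sq_of_even (by rwa [h1]) s
  have q2 : IsSquare (-3 * algebraMap F E s) := by
    have := sq_of_even (k := F) (L := E) (by rwa [h1]) (-3 * s)
    simpa only [map_mul, map_neg, map_ofNat] using this
  have key := preC2 c2' c3' hs0' q2
  rw [cardZ2 c2' hs0' q1] at key
  have hc : Fintype.card E = Fintype.card F ^ m := by
    rw [Module.card_eq_pow_finrank (K := F) (V := E), h1]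
  have hN' : NN F (algebraMap F L s) m = (Finset.univ.filter (fun a : E => ¬ HasPre (algebraMap F E s) a)).card := by
    rw [hN, ← Set.ncard_coe_finset]; simp
  rw [← hN', hc] at key
  have : (3 : ℚ) * (NN F (algebraMap F L s) m : ℚ) + 2 * 2 = 2 * (Fintype.card F : ℚ) ^ m + 2 := by exact_mod_cast key
  linarith

lemma NN_odd1 [Fintype F] [Finite L] (hchar : 5 ≤ ringChar F) {s : F} (hs : ¬ IsSquare s) (d m : ℕ)
    (hm : d * m = Module.finrank F L) (h3 : ¬ 3 ∣ d) (h2 : ¬ 2 ∣ m) (hq : Fintype.card F % 3 = 1) :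
    NN F (algebraMap F L s) m = 0 := by
  obtain ⟨E, h1, hN⟩ := NN_eq (L := L) s d m hm h3
  obtain ⟨c2, c3⟩ := ne_of_char hchar
  have c2' : (2 : E) ≠ 0 := by
    rw [← map_ofNat (algebraMap F E) 2]; exact (_root_.map_ne_zero _).2 c2
  have c3' : (3 : E) ≠ 0 := by
    rw [← map_ofNat (algebraMap F E) 3]; exact (_root_.map_ne_zero _).2 c3
  have q0 : ¬ IsSquare (-3 * s) := by
    intro h
    obtain ⟨r, hr⟩ := neg_three_sq1 hq
    obtain ⟨t, ht⟩ := h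
    have hr0 : r ≠ 0 := by rintro rfl; apply c3; linear_combination -hr
    apply hs
    refine ⟨t / r, ?_⟩
    field_simp
    linear_combination ht - s * hr
  have q2 : ¬ IsSquare (-3 * algebraMap F E s) := by
    have := (not_congr (sq_of_odd (k := F) (L := E) (by rwa [h1]) (-3 * s))).2 q0
    simpa only [map_mul, map_neg, map_ofNat] using this
  rw [hN, Set.ncard_eq_zero]
  ext a
  simpa using preC1 c2' c3' q2 a

lemma NN_odd2 [Fintype F] [Finite L] (hchar : 5 ≤ ringChar F) {s : F} (hs : ¬ IsSquare s) (d m : ℕ)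
    (hm : d * m = Module.finrank F L) (h3 : ¬ 3 ∣ d) (h2 : ¬ 2 ∣ m) (hq : Fintype.card F % 3 = 2) :
    (NN F (algebraMap F L s) m : ℚ) = 2 / 3 * ((Fintype.card F : ℚ) ^ m + 1) := by
  classical
  obtain ⟨E, h1, hN⟩ := NN_eq (L := L) s d m hm h3
  obtain ⟨inst⟩ := nonempty_fintype E
  obtain ⟨c2, c3⟩ := ne_of_char hchar
  have c2' : (2 : E) ≠ 0 := by
    rw [← map_ofNat (algebraMap F E) 2]; exact (_root_.map_ne_zero _).2 c2
  have c3' : (3 : E) ≠ 0 := by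
    rw [← map_ofNat (algebraMap F E) 3]; exact (_root_.map_ne_zero _).2 c3
  have hs0 : s ≠ 0 := by rintro rfl; simp at hs
  have hs0' : algebraMap F E s ≠ 0 := (_root_.map_ne_zero _).2 hs0
  have q1 : ¬ IsSquare (algebraMap F E s) := (not_congr (sq_of_odd (by rwa [h1]) s)).2 hs
  have q0 : IsSquare (-3 * s) := by
    have h2F : ringChar F ≠ 2 := by omega
    have a1 := (quadraticChar_neg_one_iff_not_isSquare (F := F)).2 hs
    have a2 := (quadraticChar_neg_one_iff_not_isSquare (F := F)).2 (neg_three_sq2 c2 c3 hq)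
    rw [← quadraticChar_one_iff_isSquare (by simp [c3, hs0]), map_mul, a1, a2]
    norm_num
  have q2 : IsSquare (-3 * algebraMap F E s) := by
    have := q0.map (algebraMap F E)
    simpa only [map_mul, map_neg, map_ofNat] using this
  have key := preC2 c2' c3' hs0' q2
  rw [cardZ0 q1] at key
  have hc : Fintype.card E = Fintype.card F ^ m := by
    rw [Module.card_eq_pow_finrank (K := F) (V := E), h1]
  have hN' : NN F (algebraMap F L s) m = (Finset.univ.filter (fun a : E => ¬ HasPre (algebraMap F E s) a)).card := by
    rw [hN, ← Set.ncard_coe_finset]; simp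
  rw [← hN', hc] at key
  have : (3 : ℚ) * (NN F (algebraMap F L s) m : ℚ) + 2 * 0 = 2 * (Fintype.card F : ℚ) ^ m + 2 := by exact_mod_cast key
  linarith
end
section
variable {F L : Type*} [Field F] [Field L] [Algebra F L]

lemma rat_aeval (g h f : F[X]) (x a : L) (hx : aeval x g = a * aeval x h) :
    aeval x (ratTransform g h f) = aeval x h ^ f.natDegree * aeval a f := by
  unfold ratTransform
  rw [map_sum, aeval_eq_sum_range (p := f) a, Finset.mul_sum]
  apply Finset.sum_congr rfl
  intro i hi
  have hi' : i ≤ f.natDegree := by simpa [Nat.lt_succ_iff] using hi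
  rw [map_mul, map_mul, map_pow, map_pow, aeval_C, hx, mul_pow, Algebra.smul_def]
  have hpw : aeval x h ^ f.natDegree = aeval x h ^ (f.natDegree - i) * aeval x h ^ i := by
    rw [← pow_add, Nat.sub_add_cancel hi']
  rw [hpw]
  ring

lemma rat_aeval0 (g h f : F[X]) (x : L) (hx : aeval x h = 0) :
    aeval x (ratTransform g h f) = algebraMap F L f.leadingCoeff * aeval x g ^ f.natDegree := by
  unfold ratTransform
  rw [map_sum, Finset.sum_eq_single f.natDegree]
  · simp
  · intro i hi hne
    have hi' : f.natDegree - i ≠ 0 := by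
      have : i < f.natDegree + 1 := by simpa using hi
      omega
    rw [map_mul, map_pow (aeval x) h, hx, zero_pow hi', mul_zero]
  · simp

noncomputable abbrev gg (s : F) : F[X] := X ^ 3 + C (3 * s) * X
noncomputable abbrev hh (s : F) : F[X] := C 3 * X ^ 2 + C s

lemma aeval_gg (s : F) (x : L) : aeval x (gg s) = x ^ 3 + 3 * algebraMap F L s * x := by
  simp [gg, map_ofNat (algebraMap F L) 3]

lemma aeval_hh (s : F) (x : L) : aeval x (hh s) = 3 * x ^ 2 + algebraMap F L s := by
  simp [hh, map_ofNat (algebraMap F L) 3]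

lemma rat_root (h2 : (2 : F) ≠ 0) {s : F} (hs : s ≠ 0) {f : F[X]} (hf : f.Monic) {x : L}
    (hx : aeval x (ratTransform (gg s) (hh s) f) = 0) :
    ∃ a : L, aeval a f = 0 ∧ x ^ 3 + 3 * algebraMap F L s * x = a * (3 * x ^ 2 + algebraMap F L s) := by
  have c2' : (2 : L) ≠ 0 := by
    rw [← map_ofNat (algebraMap F L) 2]; exact (_root_.map_ne_zero _).2 h2
  have hs0' : algebraMap F L s ≠ 0 := (_root_.map_ne_zero _).2 hs
  have hne : aeval x (hh s) ≠ 0 := by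
    intro h0
    rw [rat_aeval0 _ _ _ _ h0, hf.leadingCoeff, map_one, one_mul] at hx
    have hg : aeval x (gg s) = 0 := by
      by_contra hg
      exact pow_ne_zero _ hg hx
    rw [aeval_gg] at hg
    rw [aeval_hh] at h0
    exact hden c2' (a := 0) hs0' (by rw [hg, zero_mul]) h0
  have e : aeval x (gg s) = (aeval x (gg s) / aeval x (hh s)) * aeval x (hh s) := by
    rw [div_mul_cancel₀ _ hne]
  refine ⟨aeval x (gg s) / aeval x (hh s), ?_, ?_⟩
  · rw [rat_aeval _ _ _ _ _ e] at hx
    exact (mul_eq_zero.1 hx).resolve_left (pow_ne_zero _ hne)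
  · rw [← aeval_gg, ← aeval_hh]; exact e

lemma rat_natDegree (s : F) {f : F[X]} (hf : f.Monic) (hn : 0 < f.natDegree) :
    (ratTransform (gg s) (hh s) f).natDegree = 3 * f.natDegree := by
  unfold ratTransform
  have hg : (gg s).Monic := by unfold gg; monicity!
  have hgd : (gg s).natDegree = 3 := by unfold gg; compute_degree!
  have hhd : (hh s).natDegree ≤ 2 := by unfold hh; compute_degree
  have h1 : (C (f.coeff f.natDegree) * gg s ^ f.natDegree * hh s ^ (f.natDegree - f.natDegree)).natDegree
      = 3 * f.natDegree := by
    rw [hf.coeff_natDegree]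
    simp only [map_one, one_mul, Nat.sub_self, pow_zero, mul_one]
    rw [hg.natDegree_pow, hgd, mul_comm]
  rw [Finset.sum_range_succ, natDegree_add_eq_right_of_natDegree_lt, h1]
  rw [h1]
  have : (∑ x ∈ Finset.range f.natDegree, C (f.coeff x) * gg s ^ x * hh s ^ (f.natDegree - x)).natDegree
      ≤ 3 * f.natDegree - 1 := by
    apply natDegree_sum_le_of_forall_le
    intro i hi
    have hi' : i < f.natDegree := by simpa using hi
    have k1 : (C (f.coeff i) * gg s ^ i).natDegree ≤ i * 3 := by
      refine (natDegree_C_mul_le _ _).trans ?_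
      rw [hg.natDegree_pow, hgd]
    have k2 : (hh s ^ (f.natDegree - i)).natDegree ≤ (f.natDegree - i) * 2 :=
      natDegree_pow_le_of_le _ hhd
    have k3 := natDegree_mul_le_of_le k1 k2
    refine k3.trans ?_
    omega
  omega

lemma hasPre_algEquiv (e : L ≃ₐ[F] L) (s : F) {a : L} (h : HasPre (algebraMap F L s) a) :
    HasPre (algebraMap F L s) (e a) := by
  obtain ⟨b, hb⟩ := h
  refine ⟨e b, ?_⟩
  have := congrArg e hb
  simpa only [map_add, map_mul, map_pow, map_ofNat, AlgEquiv.commutes] using this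

lemma capelli [Fintype F] [Finite L] (h2 : (2 : F) ≠ 0) {s : F} (hs : s ≠ 0) {f : F[X]} (hf : f.Monic)
    (hi : Irreducible f) (hn : f.natDegree = Module.finrank F L) {a : L} (ha : aeval a f = 0) :
    Irreducible (ratTransform (gg s) (hh s) f) ↔ ¬ HasPre (algebraMap F L s) a := by
  have : Module.Finite F L := Module.Finite.of_finite
  have hpos : 0 < f.natDegree := hi.natDegree_pos
  have hdeg := rat_natDegree s hf hpos
  constructor
  · rintro hR ⟨b, hb⟩
    have h0 : aeval b (ratTransform (gg s) (hh s) f) = 0 := by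
      rw [rat_aeval _ _ _ b a (by rw [aeval_gg, aeval_hh]; exact hb), ha, mul_zero]
    have := dvd_of_root hR h0
    rw [hdeg, ← hn] at this
    have := Nat.le_of_dvd hpos this
    omega
  · intro hP
    by_contra hR
    obtain ⟨p, hp, hpd, hple⟩ : ∃ p : F[X], Irreducible p ∧ p ∣ ratTransform (gg s) (hh s) f ∧
        2 * p.natDegree ≤ 3 * f.natDegree := by
      have hne : ratTransform (gg s) (hh s) f ≠ 0 := by
        intro h; rw [h] at hdeg; simp at hdeg; omega
      have hnu : ¬ IsUnit (ratTransform (gg s) (hh s) f) := by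
        intro h; have := natDegree_eq_zero_of_isUnit h; omega
      rw [irreducible_iff] at hR
      push Not at hR
      obtain ⟨u, v, huv, hu, hv⟩ := hR hnu
      have hu0 : u ≠ 0 := by rintro rfl; simp at huv; exact hne huv
      have hv0 : v ≠ 0 := by rintro rfl; simp at huv; exact hne huv
      have hd : u.natDegree + v.natDegree = 3 * f.natDegree := by
        rw [← hdeg, huv, natDegree_mul hu0 hv0]
      rcases le_total u.natDegree v.natDegree with h | h
      · obtain ⟨p, hp, hpu⟩ := WfDvdMonoid.exists_irreducible_factor hu hu0
        refine ⟨p, hp, hpu.trans ⟨v, huv⟩, ?_⟩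
        have := natDegree_le_of_dvd hpu hu0
        omega
      · obtain ⟨p, hp, hpu⟩ := WfDvdMonoid.exists_irreducible_factor hv hv0
        refine ⟨p, hp, hpu.trans ⟨u, by rw [huv, mul_comm]⟩, ?_⟩
        have := natDegree_le_of_dvd hpu hv0
        omega
    have hpn : p.natDegree = f.natDegree := by
      have : Fact (Irreducible p) := ⟨hp⟩
      have hfd : FiniteDimensional F (AdjoinRoot p) := (AdjoinRoot.powerBasis hp.ne_zero).finite
      have hr : aeval (AdjoinRoot.root p) (ratTransform (gg s) (hh s) f) = 0 := by
        obtain ⟨w, hw⟩ := hpd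
        rw [hw, map_mul, AdjoinRoot.aeval_eq, AdjoinRoot.mk_self, zero_mul]
      obtain ⟨a', ha', -⟩ := rat_root h2 hs hf hr
      have h5 := dvd_of_root hi ha'
      rw [(AdjoinRoot.powerBasis hp.ne_zero).finrank, AdjoinRoot.powerBasis_dim] at h5
      obtain ⟨c, hc⟩ := h5
      have hp0 := hp.natDegree_pos
      have : c = 1 := by
        rcases c with _ | _ | c
        · omega
        · rfl
        · exfalso
          rw [hc] at hple
          nlinarith
      rw [hc, this, mul_one]
    obtain ⟨x, hx⟩ := exists_root_of_dvd (L := L) hp (by rw [hpn, hn])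
    have hr : aeval x (ratTransform (gg s) (hh s) f) = 0 := by
      obtain ⟨w, hw⟩ := hpd
      rw [hw, map_mul, hx, zero_mul]
    obtain ⟨a', ha', hxa⟩ := rat_root h2 hs hf hr
    have hmin : f = minpoly F a := minpoly.eq_of_irreducible_of_monic hi ha hf
    obtain ⟨e, he⟩ := minpoly.exists_algEquiv_of_root (K := F) (x := a') (y := a)
      (Algebra.IsAlgebraic.isAlgebraic a) (by rw [← hmin]; exact ha')
    apply hP
    rw [← he]
    exact hasPre_algEquiv e s ⟨x, hxa⟩

lemma TT_card [Fintype F] [Finite L] (h2 : (2 : F) ≠ 0) {s : F} (hs : s ≠ 0) :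
    TT F (algebraMap F L s) (Module.finrank F L) = Module.finrank F L *
      (IrredSet (gg s) (hh s) (Module.finrank F L)).ncard := by
  classical
  have : Module.Finite F L := Module.Finite.of_finite
  obtain ⟨inst⟩ := nonempty_fintype L
  set n := Module.finrank F L with hn
  set S := Finset.univ.filter
      (fun a : L => (minpoly F a).natDegree = n ∧ ¬ HasPre (algebraMap F L s) a) with hS
  have h1 : TT F (algebraMap F L s) n = S.card := by
    unfold TT; rw [← Set.ncard_coe_finset]; simp [hS]
  have hI : IrredSet (gg s) (hh s) n = ↑(S.image (minpoly F)) := by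
    ext f
    simp only [IrredSet, Set.mem_ofPred_eq, Finset.coe_image, Set.mem_image, hS, Finset.coe_filter,
      Finset.mem_univ, true_and]
    constructor
    · rintro ⟨hf, hi, hd, hR⟩
      obtain ⟨a, ha⟩ := exists_root_of_dvd (L := L) hi (by rw [hd])
      have hmin : f = minpoly F a := minpoly.eq_of_irreducible_of_monic hi ha hf
      exact ⟨a, ⟨by rw [← hmin, hd], (capelli h2 hs hf hi hd ha).1 hR⟩, hmin.symm⟩
    · rintro ⟨a, ⟨hd, hP⟩, rfl⟩
      have hint := IsIntegral.of_finite F a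
      exact ⟨minpoly.monic hint, minpoly.irreducible hint, hd,
        (capelli h2 hs (minpoly.monic hint) (minpoly.irreducible hint) hd (minpoly.aeval F a)).2 hP⟩
  rw [h1, hI, Set.ncard_coe_finset,
    Finset.card_eq_sum_card_fiberwise (f := minpoly F) (t := S.image (minpoly F))
      (fun a ha => Finset.mem_image_of_mem _ ha)]
  rw [Finset.sum_congr rfl (g := fun _ => n)]
  · simp [mul_comm]
  · intro f hf
    obtain ⟨a, ha, rfl⟩ := Finset.mem_image.1 hf
    simp only [hS, Finset.mem_filter, Finset.mem_univ, true_and] at ha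
    have hint := IsIntegral.of_finite F a
    have hcard := card_rootSet_eq_natDegree (K := L) (p := minpoly F a)
      (Algebra.IsSeparable.isSeparable F a) (Normal.splits inferInstance a)
    rw [← ha.1, ← hcard, ← Set.toFinset_card]
    congr 1
    ext b
    simp only [hS, Finset.mem_filter, Finset.mem_univ, true_and, Set.mem_toFinset,
      mem_rootSet]
    constructor
    · rintro ⟨-, h⟩
      exact ⟨minpoly.ne_zero hint, by rw [← h]; exact minpoly.aeval F b⟩
    · rintro ⟨-, h⟩
      have hmin : minpoly F a = minpoly F b :=
        minpoly.eq_of_irreducible_of_monic (minpoly.irreducible hint) h (minpoly.monic hint)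
      refine ⟨⟨by rw [← hmin, ha.1], ?_⟩, hmin.symm⟩
      intro hb
      obtain ⟨e, he⟩ := minpoly.exists_algEquiv_of_root (K := F) (x := b) (y := a)
        (Algebra.IsAlgebraic.isAlgebraic a) h
      apply ha.2
      rw [← he]
      exact hasPre_algEquiv e s hb
end

lemma nThree_spec {n : ℕ} (hn : 0 < n) : ∃ k, n = nThree n * k ∧ ¬ 3 ∣ k ∧ 0 < k ∧ 0 < nThree n := by
  refine ⟨n / nThree n, ?_, ?_, ?_, ?_⟩
  · exact (Nat.mul_div_cancel' (Nat.ordProj_dvd n 3)).symm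
  · exact Nat.not_dvd_ordCompl Nat.prime_three hn.ne'
  · exact Nat.ordCompl_pos 3 hn.ne'
  · unfold nThree; positivity

lemma nThree_odd (n : ℕ) : Odd (nThree n) := Odd.pow (by decide)

lemma nThree_coprime (n : ℕ) {d : ℕ} (h : ¬ 3 ∣ d) : Nat.Coprime (nThree n) d :=
  Nat.Coprime.pow_left _ ((Nat.Prime.coprime_iff_not_dvd Nat.prime_three).2 h)

/-- Theorem 9: counting monic irreducible `f` of degree `n > 1` over `F_q` (characteristic
at least five, `σ` a nonsquare) such that `f_R` is irreducible, for
`R(x) = (x³ + 3σx)/(3x² + σ)`. -/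
theorem stmt9 {F : Type*} [Field F] [Fintype F] (q : ℕ) (hq : Fintype.card F = q)
    (hchar : 5 ≤ ringChar F) (σ : F) (hσ : ¬ IsSquare σ)
    (n : ℕ) (hn : 1 < n) :
    (q % 3 = 1 →
      ((IrredSet (X ^ 3 + C (3 * σ) * X) (C 3 * X ^ 2 + C σ) n).ncard : ℚ) =
        (1 / (3 * (nThree n : ℚ))) *
          (IfunD n (2 * nThree n) ((q : ℚ) ^ (2 * nThree n)) - IfunD n (2 * nThree n) 1)) ∧
    (q % 3 = 2 →
      ((IrredSet (X ^ 3 + C (3 * σ) * X) (C 3 * X ^ 2 + C σ) n).ncard : ℚ) =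
        (2 / (3 * (nThree n : ℚ))) *
          (Ifun (n / nThree n) ((q : ℚ) ^ nThree n) - Ifun (n / nThree n) (-1))) := by
  subst hq
  obtain ⟨c2, c3⟩ := ne_of_char hchar
  have hs0 : σ ≠ 0 := by rintro rfl; simp at hσ
  have hpr : Fact (ringChar F).Prime := ⟨CharP.char_is_prime F (ringChar F)⟩
  have : NeZero n := ⟨by omega⟩
  have hfr : Module.finrank F (FiniteField.Extension F (ringChar F) n) = n :=
    FiniteField.finrank_extension F (ringChar F) n
  set L := FiniteField.Extension F (ringChar F) n with hL
  have hLfin : Finite L := Module.finite_of_finite F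
  have hn0 : 0 < n := by omega
  have hT := TT_eq (F := F) (algebraMap F L σ) n hn0
  have hC := TT_card (F := F) (L := L) c2 hs0
  rw [hfr] at hC
  rw [hC] at hT
  push_cast at hT
  obtain ⟨k, hk, hk3, hk0, hm0⟩ := nThree_spec hn0
  have hnQ : (n : ℚ) ≠ 0 := by exact_mod_cast hn0.ne'
  have hmQ : (nThree n : ℚ) ≠ 0 := by exact_mod_cast hm0.ne'
  have hkQ : (k : ℚ) ≠ 0 := by exact_mod_cast hk0.ne'
  have hnk : (n : ℚ) = nThree n * k := by exact_mod_cast hk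
  have hdiv : n / nThree n = k := Nat.div_eq_of_eq_mul_right hm0 hk
  have hdd : ∀ d ∈ n.divisors, d * (n / d) = Module.finrank F L := by
    intro d hd
    rw [hfr]; exact Nat.mul_div_cancel' (Nat.dvd_of_mem_divisors hd)
  have hz : ∀ d ∈ n.divisors, 3 ∣ d → NN F (algebraMap F L σ) (n / d) = 0 := fun d hd h3 =>
    NN_zero (L := L) σ d (n / d) (hdd d hd) h3
  constructor
  · intro hq
    by_cases h2n : 2 ∣ n
    · have h2k : 2 ∣ k := by
        rw [hk] at h2n
        exact Nat.Coprime.dvd_of_dvd_mul_left (Nat.coprime_two_left.2 (nThree_odd n)) h2n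
      obtain ⟨j, hj⟩ := h2k
      have hj0 : 0 < j := by omega
      have hn2 : n = 2 * nThree n * j := hk.trans (by rw [hj]; ring)
      have hd2 : 2 * nThree n ∣ n := ⟨j, hn2⟩
      have hdivj : n / (2 * nThree n) = j := Nat.div_eq_of_eq_mul_right (by omega) hn2
      have hsum : ∑ d ∈ n.divisors, ((ArithmeticFunction.moebius d : ℤ) : ℚ) *
          (NN F (algebraMap F L σ) (n / d) : ℚ) =
          ∑ d ∈ j.divisors, ((ArithmeticFunction.moebius d : ℤ) : ℚ) *
            (2 / 3 * (((Fintype.card F : ℚ) ^ (2 * nThree n)) ^ (j / d) - 1 ^ (j / d))) := by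
        rw [← Finset.sum_subset (Nat.divisors_subset_of_dvd hn0.ne' (Dvd.intro_left _ hn2.symm))]
        · apply Finset.sum_congr rfl
          intro d hd
          have hdj := Nat.dvd_of_mem_divisors hd
          obtain ⟨e, he⟩ := hdj
          have hd0 : 0 < d := Nat.pos_of_mem_divisors hd
          have hje : j / d = e := Nat.div_eq_of_eq_mul_right hd0 he
          have hne : n / d = 2 * nThree n * e :=
            Nat.div_eq_of_eq_mul_right hd0 (by rw [he] at hn2; linarith)
          have hd3 : ¬ 3 ∣ d := fun h => hk3 (h.trans ⟨2 * e, by rw [hj, he]; ring⟩)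
          rw [NN_even hchar hσ d (n / d) (hdd d (Nat.divisors_subset_of_dvd hn0.ne' (Dvd.intro_left _ hn2.symm) hd)) hd3
            (by rw [hne, mul_assoc]; exact Dvd.intro _ rfl), hje, hne, one_pow, pow_mul]
        · intro d hd hdn
          by_cases hd3 : 3 ∣ d
          · rw [hz d hd hd3]; simp
          · by_cases hd2 : 2 ∣ n / d
            · exfalso
              apply hdn
              rw [Nat.mem_divisors]
              refine ⟨?_, hj0.ne'⟩
              have h1 : d ∣ 2 * j := by
                have := Nat.dvd_of_mem_divisors hd
                rw [hk, hj] at this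
                exact Nat.Coprime.dvd_of_dvd_mul_left (nThree_coprime n hd3).symm this
              obtain ⟨e, he⟩ := h1
              have hd0 : 0 < d := Nat.pos_of_mem_divisors hd
              have hne : n / d = nThree n * e :=
                Nat.div_eq_of_eq_mul_right hd0 (hk.trans (by rw [hj, he]; ring))
              rw [hne] at hd2
              have := Nat.Coprime.dvd_of_dvd_mul_left (Nat.coprime_two_left.2 (nThree_odd n)) hd2
              obtain ⟨c, hc⟩ := this
              refine ⟨c, ?_⟩
              rw [hc] at he
              linarith
            · rw [NN_odd1 hchar hσ d (n / d) (hdd d hd) hd3 hd2 hq]; simp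
      rw [hsum] at hT
      have hjQ : (j : ℚ) ≠ 0 := by exact_mod_cast hj0.ne'
      have hnj : (n : ℚ) = 2 * nThree n * j := by exact_mod_cast hn2
      unfold IfunD
      rw [if_pos hd2, if_pos hd2, hdivj]
      unfold Ifun
      rw [← mul_sub, ← Finset.sum_sub_distrib]
      have e1 : ∀ d ∈ j.divisors, ((ArithmeticFunction.moebius d : ℤ) : ℚ) *
            (2 / 3 * (((Fintype.card F : ℚ) ^ (2 * nThree n)) ^ (j / d) - 1 ^ (j / d))) =
          2 / 3 * (((ArithmeticFunction.moebius d : ℤ) : ℚ) * ((Fintype.card F : ℚ) ^ (2 * nThree n)) ^ (j / d)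
           - ((ArithmeticFunction.moebius d : ℤ) : ℚ) * 1 ^ (j / d)) := by
        intro d _; ring
      rw [Finset.sum_congr rfl e1, ← Finset.mul_sum] at hT
      apply mul_left_cancel₀ hnQ
      rw [hT, hnj]
      field_simp
    · have hd2 : ¬ 2 * nThree n ∣ n := fun h => h2n ((Dvd.intro _ rfl).trans h)
      unfold IfunD
      rw [if_neg hd2, if_neg hd2]
      rw [Finset.sum_eq_zero] at hT
      · have := (mul_eq_zero.1 hT).resolve_left hnQ
        rw [sub_zero, mul_zero]; exact this
      · intro d hd
        by_cases hd3 : 3 ∣ d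
        · rw [hz d hd hd3]; simp
        · have hnd : ¬ 2 ∣ n / d := fun h => h2n (h.trans (Nat.div_dvd_of_dvd (Nat.dvd_of_mem_divisors hd)))
          rw [NN_odd1 hchar hσ d (n / d) (hdd d hd) hd3 hnd hq]; simp
  · intro hq
    have hsum : ∑ d ∈ n.divisors, ((ArithmeticFunction.moebius d : ℤ) : ℚ) *
          (NN F (algebraMap F L σ) (n / d) : ℚ) =
          ∑ d ∈ k.divisors, ((ArithmeticFunction.moebius d : ℤ) : ℚ) *
            (2 / 3 * (((Fintype.card F : ℚ) ^ (nThree n)) ^ (k / d) - (-1) ^ (k / d))) := by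
      have hsub := Nat.divisors_subset_of_dvd hn0.ne' (Dvd.intro_left _ hk.symm)
      rw [← Finset.sum_subset hsub]
      · apply Finset.sum_congr rfl
        intro d hd
        have hdj := Nat.dvd_of_mem_divisors hd
        obtain ⟨e, he⟩ := hdj
        have hd0 : 0 < d := Nat.pos_of_mem_divisors hd
        have hke : k / d = e := Nat.div_eq_of_eq_mul_right hd0 he
        have hne : n / d = nThree n * e :=
          Nat.div_eq_of_eq_mul_right hd0 (by rw [he] at hk; linarith)
        have hd3 : ¬ 3 ∣ d := fun h => hk3 (h.trans ⟨e, he⟩)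
        have hpar : 2 ∣ nThree n * e ↔ 2 ∣ e :=
          ⟨fun h => Nat.Coprime.dvd_of_dvd_mul_left (Nat.coprime_two_left.2 (nThree_odd n)) h,
            fun h => h.mul_left _⟩
        congr 1
        by_cases h2 : 2 ∣ e
        · rw [NN_even hchar hσ d (n / d) (hdd d (hsub hd)) hd3 (by rw [hne]; exact hpar.2 h2), hke, hne,
            pow_mul, Even.neg_one_pow (even_iff_two_dvd.2 h2)]
        · rw [NN_odd2 hchar hσ d (n / d) (hdd d (hsub hd)) hd3 (by rw [hne]; exact fun h => h2 (hpar.1 h)) hq,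
            hke, hne, pow_mul, Odd.neg_one_pow (by rw [← Nat.not_even_iff_odd, even_iff_two_dvd]; exact h2)]
          ring
      · intro d hd hdn
        have hd3 : 3 ∣ d := by
          by_contra hd3
          apply hdn
          rw [Nat.mem_divisors]
          refine ⟨?_, hk0.ne'⟩
          have := Nat.dvd_of_mem_divisors hd
          rw [hk] at this
          exact Nat.Coprime.dvd_of_dvd_mul_left (nThree_coprime n hd3).symm this
        rw [hz d hd hd3]; simp
    rw [hsum] at hT
    rw [hdiv]
    unfold Ifun
    rw [← mul_sub, ← Finset.sum_sub_distrib]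
    have e1 : ∀ d ∈ k.divisors, ((ArithmeticFunction.moebius d : ℤ) : ℚ) *
            (2 / 3 * (((Fintype.card F : ℚ) ^ (nThree n)) ^ (k / d) - (-1) ^ (k / d))) =
          2 / 3 * (((ArithmeticFunction.moebius d : ℤ) : ℚ) * ((Fintype.card F : ℚ) ^ (nThree n)) ^ (k / d)
           - ((ArithmeticFunction.moebius d : ℤ) : ℚ) * (-1) ^ (k / d)) := by
      intro d _; ring
    rw [Finset.sum_congr rfl e1, ← Finset.mul_sum] at hT
    apply mul_left_cancel₀ hnQ
    rw [hT, hnk]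
    field_simp
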